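/- Let P₂ := 𝒞(2^ω, [0,1]^{2^{<ω}}) be the Polish space of continuous maps from the Cantor space into [0,1]^{2^{<ω}} with the topology of uniform convergence, and let U₁ := {(h,β) ∈ P₂ × 2^ω : h(β) ∈ 𝓟}. Then: (i) U₁ is a coanalytic subset of P₂ × 2^ω; (ii) the vertical sections {(U₁)_h : h ∈ P₂} are exactly the coanalytic subsets of 2^ω; and (iii) for every coanalytic subset S of ω^ω × 2^ω there is a Borel map b : ω^ω → P₂ such that S_α = (U₁)_{b(α)} for every α ∈ ω^ω. That is, U₁ is uniformly P₂-universal for the coanalytic subsets of 2^ω. -/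

import Mathlib

open MeasureTheory Filter Topology
open scoped ENNReal

/-- The basic cylinder `N_s` determined by a finite binary sequence `s`:
the set of all `β ∈ 2^ω` extending `s`. -/
def cyl (s : List Bool) : Set (ℕ → Bool) :=
  {β | ∀ i : Fin s.length, β i = s.get i}

/-- The initial segment `β↾l` of `β ∈ 2^ω`, as a finite binary sequence. -/
def seg (β : ℕ → Bool) (l : ℕ) : List Bool := List.ofFn (fun i : Fin l => β i)

/-- A martingale: a `[0,1]`-valued function on finite binary sequences with
`f(s) = (f(s⌢0) + f(s⌢1))/2`. -/
def IsMartingale (f : List Bool → ℝ) : Prop :=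
  (∀ s, f s ∈ Set.Icc (0:ℝ) 1) ∧
  ∀ s, f s = (f (s ++ [false]) + f (s ++ [true])) / 2

/-- The oscillation `osc(f,β) = inf_N sup_{p,q ≥ N} |f(β↾p) − f(β↾q)|`. -/
noncomputable def osc (f : List Bool → ℝ) (β : ℕ → Bool) : ℝ :=
  ⨅ N : ℕ, ⨆ p : {n : ℕ // N ≤ n}, ⨆ q : {n : ℕ // N ≤ n},
    |f (seg β p.1) - f (seg β q.1)|

/-- The set of divergence `D(f) = {β : osc(f,β) > 0}`. -/
def divSet (f : List Bool → ℝ) : Set (ℕ → Bool) := {β | 0 < osc f β}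

/-- `M` has density 1 at `β`: `λ(M ∩ N_{β↾l}) / λ(N_{β↾l}) → 1`. -/
def densityOne (μ : Measure (ℕ → Bool)) (M : Set (ℕ → Bool)) (β : ℕ → Bool) : Prop :=
  Tendsto (fun l : ℕ => μ (M ∩ cyl (seg β l)) / μ (cyl (seg β l))) atTop (𝓝 1)

/-- A set is `Σ⁰₃` iff it is a countable union of `Gδ` sets. -/
def IsSigma03 {X : Type*} [TopologicalSpace X] (S : Set X) : Prop :=
  ∃ g : ℕ → Set X, (∀ n, IsGδ (g n)) ∧ S = ⋃ n, g n

/-- A set is coanalytic (`Π¹₁`) iff its complement is analytic. -/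
def IsCoanalytic {X : Type*} [TopologicalSpace X] (S : Set X) : Prop :=
  MeasureTheory.AnalyticSet Sᶜ

/-- The associated (partial) function of a martingale: `ψ(f)(β) = lim_l f(β↾l)`
(a junk value if the limit does not exist). -/
noncomputable def psi (f : List Bool → ℝ) (β : ℕ → Bool) : ℝ :=
  limUnder atTop (fun l => f (seg β l))

/-- The Polish space `P₂ = 𝒞(2^ω, [0,1]^{2^{<ω}})` with the topology of
uniform convergence (= compact-open topology). -/
abbrev Ptwo := C((ℕ → Bool), (List Bool → ℝ))

/-- The set `𝓟` of everywhere converging martingales, inside `[0,1]^{2^{<ω}}`. -/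
def Pconv : Set (List Bool → ℝ) :=
  {f | IsMartingale f ∧ ∀ β : ℕ → Bool, osc f β = 0}

/-- `U₁ = {(h,β) ∈ P₂ × 2^ω : h(β) ∈ 𝓟}`. -/
def Uone : Set (Ptwo × (ℕ → Bool)) := {p | p.1 p.2 ∈ Pconv}

/-!
An analytic set `A` is the set of `x` whose tree `T x` of binary strings, depending on `x` in a
locally constant way, has a branch with infinitely many ones, no two of them adjacent: code
`γ ∈ ω^ω` by the gaps between consecutive ones. Such branches are detected by a gambler whose
capital is `1/3` or `2/3` and who, right after each one that still lies in `T x`, places a bet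
exchanging these two values on the outcome `0` and settling the capital at `0` or `1` for ever on
the outcome `1`. The capital is a martingale; it fails to converge along `β` exactly if infinitely
many bets are placed along `β` and none of them sees a `1`, that is, if `β` is a branch as above.
Hence it converges everywhere if and only if `x ∉ A`. As it depends continuously on `x`, for
`A ⊆ X × 2^ω` it can be curried into a continuous map `X → P₂`.
-/

instance instPolishSpaceBool : PolishSpace Bool where

namespace IsCoanalytic

variable {X Y : Type*} [TopologicalSpace X] [TopologicalSpace Y]

theorem inter {S T : Set X} (hS : IsCoanalytic S) (hT : IsCoanalytic T) :
    IsCoanalytic (S ∩ T) := by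
  rw [IsCoanalytic, Set.compl_inter, Set.union_eq_iUnion]
  exact AnalyticSet.iUnion (Bool.forall_bool.2 ⟨hT, hS⟩)

theorem preimage [PolishSpace X] [T2Space Y] {S : Set Y} (hS : IsCoanalytic S) {f : X → Y}
    (hf : Continuous f) : IsCoanalytic (f ⁻¹' S) :=
  AnalyticSet.preimage hS hf

theorem forall_mem {S : Set (X × Y)} (hS : IsCoanalytic S) :
    IsCoanalytic {x | ∀ y, (x, y) ∈ S} := by
  have hcompl : {x | ∀ y, (x, y) ∈ S}ᶜ = Prod.fst '' Sᶜ := by ext; simp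
  rw [IsCoanalytic, hcompl]
  exact hS.image_of_continuous continuous_fst

end IsCoanalytic

theorem isCoanalytic_of_measurableSet {X : Type*} [TopologicalSpace X] [PolishSpace X]
    [MeasurableSpace X] [BorelSpace X] {S : Set X} (hS : MeasurableSet S) : IsCoanalytic S :=
  hS.compl.analyticSet

section Seg

theorem length_seg (β : ℕ → Bool) (n : ℕ) : (seg β n).length = n := List.length_ofFn

theorem seg_succ (β : ℕ → Bool) (n : ℕ) : seg β (n + 1) = seg β n ++ [β n] := by
  simp only [seg, List.ofFn_succ_last, Fin.val_castSucc, Fin.val_last]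

theorem seg_eq_seg_iff {β γ : ℕ → Bool} {n : ℕ} :
    seg β n = seg γ n ↔ ∀ i < n, β i = γ i := by
  simp only [seg, List.ofFn_inj, funext_iff, Fin.forall_iff]

theorem eventually_forall_lt_eq {D : Type*} [TopologicalSpace D] [DiscreteTopology D]
    (x : ℕ → D) (n : ℕ) : ∀ᶠ y in 𝓝 x, ∀ i < n, y i = x i :=
  (PiNat.isOpen_cylinder (fun _ ↦ D) x n).mem_nhds (PiNat.self_mem_cylinder x n)

theorem tendsto_of_forall_lt_eq {D : Type*} [TopologicalSpace D] {u : ℕ → ℕ → D} {x : ℕ → D}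
    (h : ∀ n, ∀ i < n, u n i = x i) : Tendsto u atTop (𝓝 x) :=
  tendsto_pi_nhds.2 fun i ↦ tendsto_atTop_of_eventually_const (i₀ := i + 1) fun n hn ↦ h n i hn

theorem continuous_apply_seg (n : ℕ) :
    Continuous fun x : (List Bool → ℝ) × (ℕ → Bool) ↦ x.1 (seg x.2 n) := by
  refine continuous_iff_continuousAt.2 fun x ↦ ?_
  have heval : ContinuousAt (fun y : (List Bool → ℝ) × (ℕ → Bool) ↦ y.1 (seg x.2 n)) x := by
    fun_prop
  refine heval.congr ?_
  filter_upwards [continuousAt_snd.eventually (eventually_forall_lt_eq x.2 n)] with y hy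
  rw [seg_eq_seg_iff.2 hy]

end Seg

section Convergence

theorem osc_eq_zero_iff_cauchySeq {f : List Bool → ℝ} (hf : ∀ s, f s ∈ Set.Icc (0 : ℝ) 1)
    (β : ℕ → Bool) : osc f β = 0 ↔ CauchySeq fun n ↦ f (seg β n) := by
  have habs (p q : ℕ) : |f (seg β p) - f (seg β q)| ≤ 1 := by
    simpa using abs_sub_le_of_le_of_le (hf (seg β p)).1 (hf (seg β p)).2
      (hf (seg β q)).1 (hf (seg β q)).2
  let tail (N : ℕ) : ℝ := ⨆ p : {n // N ≤ n}, ⨆ q : {n // N ≤ n},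
    |f (seg β p.1) - f (seg β q.1)|
  have tail_nonneg (N : ℕ) : 0 ≤ tail N :=
    Real.iSup_nonneg fun _ ↦ Real.iSup_nonneg fun _ ↦ abs_nonneg _
  have abs_le_tail {N p q : ℕ} (hp : N ≤ p) (hq : N ≤ q) :
      |f (seg β p) - f (seg β q)| ≤ tail N :=
    le_ciSup_of_le ⟨1, Set.forall_mem_range.2 fun _ ↦
        Real.iSup_le (fun _ ↦ habs _ _) zero_le_one⟩ ⟨p, hp⟩ <|
      le_ciSup (f := fun q : {n // N ≤ n} ↦ |f (seg β p) - f (seg β q.1)|)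
        ⟨1, Set.forall_mem_range.2 fun _ ↦ habs _ _⟩ ⟨q, hq⟩
  change ⨅ N, tail N = 0 ↔ _
  rw [Metric.cauchySeq_iff]
  constructor
  · intro hzero ε hε
    obtain ⟨N, hN⟩ := exists_lt_of_ciInf_lt (hzero.trans_lt hε)
    exact ⟨N, fun p hp q hq ↦ (abs_le_tail hp hq).trans_lt hN⟩
  · intro hcauchy
    refine le_antisymm (le_of_forall_pos_le_add fun ε hε ↦ ?_) (Real.iInf_nonneg tail_nonneg)
    obtain ⟨N, hN⟩ := hcauchy ε hε
    rw [zero_add]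
    exact ciInf_le_of_le ⟨0, Set.forall_mem_range.2 tail_nonneg⟩ N <|
      Real.iSup_le (fun p ↦ Real.iSup_le (fun q ↦ (hN p p.2 q q.2).le) hε.le) hε.le

theorem mem_Pconv_iff {f : List Bool → ℝ} :
    f ∈ Pconv ↔ IsMartingale f ∧ ∀ β, ∃ c, Tendsto (fun n ↦ f (seg β n)) atTop (𝓝 c) :=
  and_congr_right fun hf ↦ forall_congr' fun β ↦
    (osc_eq_zero_iff_cauchySeq hf.1 β).trans
      ⟨cauchySeq_tendsto_of_complete, fun ⟨_, hc⟩ ↦ hc.cauchySeq⟩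

theorem isClosed_isMartingale : IsClosed {f | IsMartingale f} := by
  simp only [IsMartingale, Set.ofPred_and, Set.ofPred_forall]
  refine (isClosed_iInter fun s ↦ ?_).inter (isClosed_iInter fun s ↦ ?_)
  · exact isClosed_Icc.preimage (continuous_apply s)
  · exact isClosed_eq (by fun_prop) (by fun_prop)

theorem isCoanalytic_Pconv : IsCoanalytic Pconv := by
  have hconv : MeasurableSet {x : (List Bool → ℝ) × (ℕ → Bool) |
      ∃ c, Tendsto (fun n ↦ x.1 (seg x.2 n)) atTop (𝓝 c)} :=
    measurableSet_exists_tendsto fun n ↦ (continuous_apply_seg n).measurable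
  have hPconv : Pconv = {f | IsMartingale f} ∩
      {f | ∀ β, ∃ c, Tendsto (fun n ↦ f (seg β n)) atTop (𝓝 c)} :=
    Set.ext fun _ ↦ mem_Pconv_iff
  rw [hPconv]
  exact (isCoanalytic_of_measurableSet isClosed_isMartingale.measurableSet).inter
    (isCoanalytic_of_measurableSet hconv).forall_mem

end Convergence

section Betting

/-- The capital after a bet: a gambler owning `v` bets so that on the outcome `0` the capitals
`1/3` and `2/3` are exchanged; fairness then forces `0`, respectively `1`, on the outcome `1`.
With any other capital the gambler no longer plays. -/
noncomputable def bet (v : ℝ) (c : Bool) : ℝ :=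
  if v = 1 / 3 then (if c then 0 else 2 / 3)
  else if v = 2 / 3 then (if c then 1 else 1 / 3)
  else v

theorem bet_fair (v : ℝ) : v = (bet v false + bet v true) / 2 := by
  unfold bet
  split_ifs <;> grind

theorem bet_mem_Icc {v : ℝ} (hv : v ∈ Set.Icc (0 : ℝ) 1) (c : Bool) :
    bet v c ∈ Set.Icc (0 : ℝ) 1 := by
  unfold bet
  split_ifs <;> first | exact hv | norm_num

theorem bet_bet_true (v : ℝ) (c : Bool) : bet (bet v true) c = bet v true := by
  unfold bet
  split_ifs <;> grind

open Classical in
/-- The capital of a gambler who starts with `1/3` and bets exactly after the strings in `B`. -/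
noncomputable def capital (B : Set (List Bool)) (s : List Bool) : ℝ :=
  s.reverseRecOn (1 / 3) fun s c v ↦ if s ∈ B then bet v c else v

/-- Along `β` the gambler with betting set `B` bets infinitely often, each time with
outcome `0`. -/
def BetsForever (B : Set (List Bool)) (β : ℕ → Bool) : Prop :=
  (∃ᶠ n in atTop, seg β n ∈ B) ∧ ∀ n, seg β n ∈ B → β n = false

variable {B : Set (List Bool)} {β : ℕ → Bool} {s : List Bool} {n : ℕ}

theorem capital_nil : capital B [] = 1 / 3 := by
  rw [capital, List.reverseRecOn_nil]

open Classical in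
theorem capital_append_singleton (c : Bool) :
    capital B (s ++ [c]) = if s ∈ B then bet (capital B s) c else capital B s := by
  rw [capital, List.reverseRecOn_concat, capital]

theorem capital_append_of_mem (hs : s ∈ B) (c : Bool) :
    capital B (s ++ [c]) = bet (capital B s) c := by
  rw [capital_append_singleton, if_pos hs]

theorem capital_append_of_notMem (hs : s ∉ B) (c : Bool) :
    capital B (s ++ [c]) = capital B s := by
  rw [capital_append_singleton, if_neg hs]

theorem isMartingale_capital (B : Set (List Bool)) : IsMartingale (capital B) := by
  constructor
  · intro s
    induction s using List.reverseRecOn with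
    | nil => norm_num [capital_nil]
    | append_singleton s c ih =>
      rw [capital_append_singleton]
      split_ifs
      exacts [bet_mem_Icc ih c, ih]
  · intro s
    by_cases hs : s ∈ B
    · simpa only [capital_append_of_mem hs] using bet_fair _
    · simp only [capital_append_of_notMem hs, add_self_div_two]

theorem isLocallyConstant_capital {Z : Type*} [TopologicalSpace Z] {B : Z → Set (List Bool)}
    (hB : ∀ s, IsLocallyConstant fun z ↦ s ∈ B z) (s : List Bool) :
    IsLocallyConstant fun z ↦ capital (B z) s := by
  classical
  induction s using List.reverseRecOn with
  | nil => exact IsLocallyConstant.of_constant _ fun _ _ ↦ by rw [capital_nil, capital_nil]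
  | append_singleton s c ih =>
    simp only [capital_append_singleton]
    exact (hB s).comp₂ ih fun p v ↦ if p then bet v c else v

theorem capital_seg_eq_of_forall_notMem {N : ℕ} (h : ∀ n ≥ N, seg β n ∉ B) (hn : N ≤ n) :
    capital B (seg β n) = capital B (seg β N) := by
  induction n, hn using Nat.le_induction with
  | base => rfl
  | succ n hn ih => rw [seg_succ, capital_append_of_notMem (h n hn), ih]

theorem capital_seg_eq_of_bet_true {N : ℕ} (hN : seg β N ∈ B) (hβ : β N = true) (hn : N < n) :
    capital B (seg β n) = bet (capital B (seg β N)) true := by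
  induction n, hn using Nat.le_induction with
  | base => rw [seg_succ, capital_append_of_mem hN, hβ]
  | succ n _ ih =>
    rw [seg_succ, capital_append_singleton, ih]
    split_ifs
    exacts [bet_bet_true _ _, rfl]

theorem exists_tendsto_capital_of_not_betsForever (h : ¬ BetsForever B β) :
    ∃ c, Tendsto (fun n ↦ capital B (seg β n)) atTop (𝓝 c) := by
  rw [BetsForever, not_and_or, not_frequently, eventually_atTop] at h
  rcases h with ⟨N, hN⟩ | h
  · exact ⟨_, tendsto_atTop_of_eventually_const fun _ ↦ capital_seg_eq_of_forall_notMem hN⟩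
  · push Not at h
    obtain ⟨N, hN, hβ⟩ := h
    exact ⟨_, tendsto_atTop_of_eventually_const fun _ ↦
      capital_seg_eq_of_bet_true hN (Bool.eq_true_of_not_eq_false hβ)⟩

theorem BetsForever.capital_seg (h : BetsForever B β) (n : ℕ) :
    capital B (seg β n) = 1 / 3 ∨ capital B (seg β n) = 2 / 3 := by
  induction n with
  | zero => exact Or.inl capital_nil
  | succ n ih =>
    by_cases hn : seg β n ∈ B
    · rw [seg_succ, capital_append_of_mem hn, h.2 n hn]
      rcases ih with hv | hv <;> norm_num [hv, bet]
    · rwa [seg_succ, capital_append_of_notMem hn]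

theorem BetsForever.abs_capital_succ_sub (h : BetsForever B β) (hn : seg β n ∈ B) :
    |capital B (seg β (n + 1)) - capital B (seg β n)| = 1 / 3 := by
  rw [seg_succ, capital_append_of_mem hn, h.2 n hn]
  rcases h.capital_seg n with hv | hv <;> norm_num [hv, bet, abs_of_neg]

theorem BetsForever.not_tendsto_capital (h : BetsForever B β) (c : ℝ) :
    ¬ Tendsto (fun n ↦ capital B (seg β n)) atTop (𝓝 c) := by
  intro hc
  have hstep : Tendsto (fun n ↦ |capital B (seg β (n + 1)) - capital B (seg β n)|) atTop (𝓝 0) := by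
    simpa using ((hc.comp (tendsto_add_atTop_nat 1)).sub hc).abs
  have hsmall := hstep.eventually_lt_const (by norm_num : (0 : ℝ) < 1 / 3)
  obtain ⟨n, hn, hlt⟩ := (h.1.and_eventually hsmall).exists
  exact hlt.ne (h.abs_capital_succ_sub hn)

theorem capital_mem_Pconv_iff : capital B ∈ Pconv ↔ ¬ ∃ β, BetsForever B β := by
  rw [mem_Pconv_iff, not_exists]
  refine (and_iff_right (isMartingale_capital B)).trans (forall_congr' fun β ↦ ?_)
  exact ⟨fun ⟨c, hc⟩ h ↦ h.not_tendsto_capital c hc, exists_tendsto_capital_of_not_betsForever⟩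

end Betting

section Gaps

/-- `β ∈ 2^ω` has infinitely many ones, no two of them adjacent. Such `β` code the elements of
`ω^ω`, see `gaps`. -/
def IsSparse (β : ℕ → Bool) : Prop :=
  (∃ᶠ n in atTop, β n = true) ∧ ∀ n, β n = true → β (n + 1) = false

/-- The sequence of gaps between the successive ones of `β`, where the least possible gap for a
sparse `β`, namely two, counts as `0`. It is meaningful only if `β` has infinitely many ones. -/
noncomputable def gaps (β : ℕ → Bool) (m : ℕ) : ℕ :=
  Nat.nth (β · = true) (m + 1) - Nat.nth (β · = true) m - 2

theorem eventually_nth_eq {β : ℕ → Bool} (hβ : ∃ᶠ n in atTop, β n = true) (m : ℕ) :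
    ∀ᶠ γ in 𝓝 β, Nat.nth (γ · = true) m = Nat.nth (β · = true) m := by
  have hinf : {n | β n = true}.Infinite := Nat.frequently_atTop_iff_infinite.1 hβ
  set k := Nat.nth (β · = true) m
  filter_upwards [eventually_forall_lt_eq β (k + 1)] with γ hγ
  have hcount : Nat.count (γ · = true) k = m := by
    rw [← Nat.count_nth_of_infinite hinf m, Nat.count_eq_card_filter_range,
      Nat.count_eq_card_filter_range]
    exact congrArg _ (Finset.filter_congr fun i hi ↦ by grind)
  have hk : γ k = true := (hγ k k.lt_succ_self).trans (Nat.nth_mem_of_infinite hinf m)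
  rw [← hcount, Nat.nth_count hk]

theorem continuousAt_gaps {β : ℕ → Bool} (hβ : ∃ᶠ n in atTop, β n = true) :
    ContinuousAt gaps β := by
  refine continuousAt_pi.2 fun m ↦ tendsto_nhds_of_eventually_eq ?_
  filter_upwards [eventually_nth_eq hβ m, eventually_nth_eq hβ (m + 1)] with γ hm hm'
  rw [gaps, gaps, hm, hm']

theorem exists_nth_eq_of_strictMono {p : ℕ → ℕ} (hp : StrictMono p) :
    ∃ β : ℕ → Bool, (∀ n, β n = true ↔ n ∈ Set.range p) ∧ Nat.nth (β · = true) = p := by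
  classical
  refine ⟨fun n ↦ decide (n ∈ Set.range p), fun n ↦ decide_eq_true_iff, ?_⟩
  have hinf : (Set.range p).Infinite := Set.infinite_range_of_injective hp.injective
  simp only [decide_eq_true_eq]
  exact ((Nat.nth_strictMono hinf).range_inj hp).1 (Nat.range_nth_of_infinite hinf)

theorem exists_isSparse_gaps_eq (γ : ℕ → ℕ) : ∃ β, IsSparse β ∧ gaps β = γ := by
  let p (m : ℕ) : ℕ := ∑ i ∈ Finset.range m, (γ i + 2)
  have p_succ (m : ℕ) : p (m + 1) = p m + (γ m + 2) := Finset.sum_range_succ _ _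
  have hp : StrictMono p := strictMono_nat_of_lt_succ fun m ↦ by grind
  obtain ⟨β, hβ, hnth⟩ := exists_nth_eq_of_strictMono hp
  refine ⟨β, ⟨frequently_atTop.2 fun m ↦ ⟨p m, hp.le_apply, (hβ _).2 ⟨m, rfl⟩⟩, fun n hn ↦ ?_⟩, ?_⟩
  · obtain ⟨m, rfl⟩ := (hβ n).1 hn
    refine Bool.eq_false_of_not_eq_true fun hn' ↦ ?_
    obtain ⟨m', hm'⟩ := (hβ _).1 hn'
    have hlt : m < m' := hp.lt_iff_lt.1 (by omega)
    have hle : p (m + 1) ≤ p m' := hp.monotone hlt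
    grind
  · funext m
    rw [gaps, hnth, p_succ, Nat.add_sub_cancel_left, Nat.add_sub_cancel]

end Gaps

section Scheme

variable {X D : Type*}

/-- The tree of attempts to write `x` as `g (gaps β)`: a string `s` belongs to it if some `β`
extending `s` does so up to precision `s.length`, as measured by the coordinates `e`. -/
def approxTree (g : (ℕ → ℕ) → X) (e : X → ℕ → D) (x : X) : Set (List Bool) :=
  {s | ∃ β, seg β s.length = s ∧ ∀ i < s.length, e (g (gaps β)) i = e x i}

variable {g : (ℕ → ℕ) → X} {e : X → ℕ → D} {x : X}

theorem seg_mem_approxTree {β : ℕ → Bool} {n : ℕ} :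
    seg β n ∈ approxTree g e x ↔
      ∃ δ, (∀ i < n, δ i = β i) ∧ ∀ i < n, e (g (gaps δ)) i = e x i := by
  simp only [approxTree, Set.mem_ofPred_eq, length_seg, seg_eq_seg_iff]

theorem antitone_seg_mem_approxTree (β : ℕ → Bool) :
    Antitone fun n ↦ seg β n ∈ approxTree g e x := by
  intro m n hmn
  simp only [seg_mem_approxTree]
  rintro ⟨δ, hδβ, hδ⟩
  exact ⟨δ, fun i hi ↦ hδβ i (hi.trans_le hmn), fun i hi ↦ hδ i (hi.trans_le hmn)⟩

variable [TopologicalSpace X] [TopologicalSpace D]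

theorem isLocallyConstant_mem_approxTree [DiscreteTopology D] (he : Continuous e) (s : List Bool) :
    IsLocallyConstant fun x ↦ s ∈ approxTree g e x := by
  have hcoord : Continuous fun x (i : Fin s.length) ↦ e x i := by fun_prop
  have := ((IsLocallyConstant.iff_continuous _).2 hcoord).comp fun y ↦
    ∃ β, seg β s.length = s ∧ ∀ i : Fin s.length, e (g (gaps β)) i = y i
  simpa only [Function.comp_def, Fin.forall_iff, approxTree, Set.mem_ofPred_eq] using this

theorem exists_isSparse_branch_approxTree_iff [T2Space D] (hg : Continuous g) (he : Continuous e)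
    (hinj : Function.Injective e) :
    (∃ β, IsSparse β ∧ ∀ n, seg β n ∈ approxTree g e x) ↔ x ∈ Set.range g := by
  constructor
  · rintro ⟨β, hβ, hbranch⟩
    choose δ hδβ hδ using fun n ↦ seg_mem_approxTree.1 (hbranch n)
    have htendsto : Tendsto (fun n ↦ e (g (gaps (δ n)))) atTop (𝓝 (e (g (gaps β)))) :=
      ((he.comp hg).continuousAt.comp (continuousAt_gaps hβ.1)).tendsto.comp
        (tendsto_of_forall_lt_eq hδβ)
    exact ⟨gaps β, hinj (tendsto_nhds_unique htendsto (tendsto_of_forall_lt_eq hδ))⟩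
  · rintro ⟨γ, rfl⟩
    obtain ⟨β, hβ, rfl⟩ := exists_isSparse_gaps_eq γ
    exact ⟨β, hβ, fun n ↦ seg_mem_approxTree.2 ⟨β, fun _ _ ↦ rfl, fun _ _ ↦ rfl⟩⟩

/-- The gambler with this betting set bets after each one as long as the play stays in the
tree `T`. -/
def betsAfterOnes (T : Set (List Bool)) : Set (List Bool) := {s ∈ T | s.getLast? = some true}

theorem seg_succ_mem_betsAfterOnes {T : Set (List Bool)} {β : ℕ → Bool} {n : ℕ} :
    seg β (n + 1) ∈ betsAfterOnes T ↔ seg β (n + 1) ∈ T ∧ β n = true := by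
  simp [betsAfterOnes, seg_succ]

theorem betsForever_betsAfterOnes_iff {T : Set (List Bool)} {β : ℕ → Bool}
    (hT : Antitone fun n ↦ seg β n ∈ T) :
    BetsForever (betsAfterOnes T) β ↔ IsSparse β ∧ ∀ n, seg β n ∈ T := by
  constructor
  · rintro ⟨hbets, hzero⟩
    rw [frequently_atTop] at hbets
    refine ⟨⟨frequently_atTop.2 fun n ↦ ?_, fun n hn ↦ ?_⟩, fun n ↦ ?_⟩
    · obtain ⟨_ | k, hk, hmem⟩ := hbets (n + 1)
      · omega
      · exact ⟨k, by omega, (seg_succ_mem_betsAfterOnes.1 hmem).2⟩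
    · obtain ⟨m, hm, hmem⟩ := hbets (n + 1)
      exact hzero _ (seg_succ_mem_betsAfterOnes.2 ⟨hT hm hmem.1, hn⟩)
    · obtain ⟨m, hm, hmem⟩ := hbets n
      exact hT hm hmem.1
  · rintro ⟨⟨hones, hisolated⟩, hbranch⟩
    rw [frequently_atTop] at hones
    refine ⟨frequently_atTop.2 fun n ↦ ?_, fun n hmem ↦ ?_⟩
    · obtain ⟨k, hk, hone⟩ := hones n
      exact ⟨k + 1, by omega, seg_succ_mem_betsAfterOnes.2 ⟨hbranch _, hone⟩⟩
    · obtain _ | k := n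
      · simp [betsAfterOnes, seg] at hmem
      · exact hisolated k (seg_succ_mem_betsAfterOnes.1 hmem).2

theorem exists_betsForever_iff_of_analyticSet [DiscreteTopology D] {A : Set X} (hA : AnalyticSet A)
    (he : Continuous e) (hinj : Function.Injective e) :
    ∃ B : X → Set (List Bool), (∀ s, IsLocallyConstant fun x ↦ s ∈ B x) ∧
      ∀ x, (∃ β, BetsForever (B x) β) ↔ x ∈ A := by
  rw [AnalyticSet] at hA
  obtain rfl | ⟨g, hg, rfl⟩ := hA
  · exact ⟨fun _ ↦ ∅, fun _ ↦ IsLocallyConstant.const _, by simp [BetsForever]⟩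
  refine ⟨fun x ↦ betsAfterOnes (approxTree g e x), fun s ↦ ?_, fun x ↦ ?_⟩
  · exact (isLocallyConstant_mem_approxTree he s).comp (· ∧ s.getLast? = some true)
  · simp only [betsForever_betsAfterOnes_iff (antitone_seg_mem_approxTree _)]
    exact exists_isSparse_branch_approxTree_iff hg he hinj

end Scheme

theorem isCoanalytic_Uone : IsCoanalytic Uone :=
  isCoanalytic_Pconv.preimage (f := fun p : Ptwo × (ℕ → Bool) ↦ p.1 p.2) (by fun_prop)

section Universal

variable {X D : Type*} [TopologicalSpace X] [TopologicalSpace D] [DiscreteTopology D]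
  {e : X → ℕ → D}

theorem IsCoanalytic.exists_continuous_section_Uone_eq (he : Continuous e)
    (hinj : Function.Injective e) {S : Set (X × (ℕ → Bool))} (hS : IsCoanalytic S) :
    ∃ b : X → Ptwo, Continuous b ∧ ∀ x, {β | (b x, β) ∈ Uone} = {β | (x, β) ∈ S} := by
  let coord (z : X × (ℕ → Bool)) (i : ℕ) : D × Bool := (e z.1 i, z.2 i)
  have hcoord : Continuous coord := by fun_prop
  have hcoord_inj : Function.Injective coord := fun z w h ↦ by
    simp only [coord, funext_iff, Prod.mk.injEq, forall_and] at h
    exact Prod.ext (hinj (funext h.1)) (funext h.2)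
  obtain ⟨B, hB, hBS⟩ := exists_betsForever_iff_of_analyticSet hS hcoord hcoord_inj
  let F : C(X × (ℕ → Bool), List Bool → ℝ) :=
    ⟨fun z ↦ capital (B z), continuous_pi fun s ↦ (isLocallyConstant_capital hB s).continuous⟩
  refine ⟨F.curry, F.curry.continuous, fun x ↦ Set.ext fun β ↦ ?_⟩
  change capital (B (x, β)) ∈ Pconv ↔ (x, β) ∈ S
  rw [capital_mem_Pconv_iff, hBS, Set.notMem_compl_iff]

theorem IsCoanalytic.exists_section_Uone_eq {A : Set (ℕ → Bool)} (hA : IsCoanalytic A) :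
    ∃ h : Ptwo, {β | (h, β) ∈ Uone} = A := by
  obtain ⟨b, -, hb⟩ := (hA.preimage continuous_snd).exists_continuous_section_Uone_eq
    (X := Unit) (e := fun _ _ ↦ ()) continuous_const (Function.injective_of_subsingleton _)
  exact ⟨b (), hb ()⟩

theorem Uone_uniformly_universal_general (he : Continuous e) (hinj : Function.Injective e) :
    IsCoanalytic Uone ∧
    (∀ h : Ptwo, IsCoanalytic {β : ℕ → Bool | (h, β) ∈ Uone}) ∧
    (∀ A : Set (ℕ → Bool), IsCoanalytic A →
      ∃ h : Ptwo, {β : ℕ → Bool | (h, β) ∈ Uone} = A) ∧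
    (∀ S : Set (X × (ℕ → Bool)), IsCoanalytic S →
      ∃ b : X → Ptwo, Continuous b ∧
        ∀ x, {β : ℕ → Bool | (b x, β) ∈ Uone} = {β | (x, β) ∈ S}) :=
  ⟨isCoanalytic_Uone,
    fun _ ↦ isCoanalytic_Uone.preimage (Continuous.prodMk_right _),
    fun _ hA ↦ hA.exists_section_Uone_eq,
    fun _ hS ↦ hS.exists_continuous_section_Uone_eq he hinj⟩

end Universal

/-- `U₁` is coanalytic, its vertical sections are exactly the
coanalytic subsets of `2^ω`, and it is uniformly universal: every coanalytic
`S ⊆ ω^ω × 2^ω` is parametrized by a Borel map `b : ω^ω → P₂`. -/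
theorem Uone_uniformly_universal :
    IsCoanalytic Uone ∧
    (∀ h : Ptwo, IsCoanalytic {β : ℕ → Bool | (h, β) ∈ Uone}) ∧
    (∀ A : Set (ℕ → Bool), IsCoanalytic A →
      ∃ h : Ptwo, {β : ℕ → Bool | (h, β) ∈ Uone} = A) ∧
    (∀ S : Set ((ℕ → ℕ) × (ℕ → Bool)), IsCoanalytic S →
      ∃ b : (ℕ → ℕ) → Ptwo,
        (letI : MeasurableSpace Ptwo := borel Ptwo; Measurable b) ∧
        ∀ α : ℕ → ℕ, {β : ℕ → Bool | (b α, β) ∈ Uone} = {β | (α, β) ∈ S}) := by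
  obtain ⟨hUone, hsection, huniversal, hparam⟩ :=
    Uone_uniformly_universal_general (continuous_id (X := ℕ → ℕ)) Function.injective_id
  refine ⟨hUone, hsection, huniversal, fun S hS ↦ ?_⟩
  obtain ⟨b, hb, hbS⟩ := hparam S hS
  let : MeasurableSpace Ptwo := borel Ptwo
  have : BorelSpace Ptwo := ⟨rfl⟩
  exact ⟨b, hb.measurable, hbS⟩
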